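/- For any two agents with additive valuations with externalities, there always exists an EFX allocation of the items between them. -/

import Mathlib

/-!
Cut and choose. For two agents, the advantage of agent `i`'s own position over the swapped one is
the signed sum `adv V i π univ`; agent `i` envies exactly when it is negative, and it changes sign
when the two bundles are exchanged. Agent `true` cuts: take `π` minimizing `|adv V true π univ|`.
If `true` envies and deleting an item `a` of negative contribution `c` left the advantage negative,
then moving `a` to the other bundle would change the advantage `F` to `F - 2 * c`, of strictly
smaller absolute value, since `F < c < 0` (`efx_cutter`). The minimality is symmetric under
exchanging the bundles, so agent `false` may choose whichever of the two orientations leaves them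
without envy.
-/

open Finset

noncomputable section

/-- Value agent `i` derives from allocation `π`, restricted to the items in `S`
(with additive externalities: `V i j a` is the value `i` gets when item `a` goes to `j`). -/
def alval {α N : Type*} [DecidableEq α] (V : N → N → α → ℝ) (i : N) (π : α → N)
    (S : Finset α) : ℝ := ∑ a ∈ S, V i (π a) a

/-- The allocation obtained from `π` by swapping the bundles of agents `i` and `j`. -/
def swapAlloc {α N : Type*} [DecidableEq N] (i j : N) (π : α → N) : α → N :=
  fun a => Equiv.swap i j (π a)

/-- Agent `i` envies agent `j` in allocation `π`. -/
def Envies {α N : Type*} [Fintype α] [DecidableEq α] [DecidableEq N]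
    (V : N → N → α → ℝ) (π : α → N) (i j : N) : Prop :=
  alval V i π univ < alval V i (swapAlloc i j π) univ

/-- Envy-freeness up to any item, under externalities. -/
def EFX {α N : Type*} [Fintype α] [DecidableEq α] [DecidableEq N]
    (V : N → N → α → ℝ) (π : α → N) : Prop :=
  ∀ i j : N, Envies V π i j → ∀ a : α,
    alval V i π (univ.erase a) - alval V i (swapAlloc i j π) (univ.erase a) >
      alval V i π univ - alval V i (swapAlloc i j π) univ →
    alval V i (swapAlloc i j π) (univ.erase a) ≤ alval V i π (univ.erase a)

/-- Envy-freeness up to one item, under externalities. -/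
def EF1 {α N : Type*} [Fintype α] [DecidableEq α] [DecidableEq N]
    (V : N → N → α → ℝ) (π : α → N) : Prop :=
  ∀ i j : N, ∃ C : Finset α, C.card ≤ 1 ∧
    alval V i (swapAlloc i j π) (univ \ C) ≤ alval V i π (univ \ C)

/-- The value agent `i` derives from `π` on the items in `S`, minus the value `i` would derive
there if the two bundles were exchanged. -/
def adv {α : Type*} (V : Bool → Bool → α → ℝ) (i : Bool) (π : α → Bool) (S : Finset α) : ℝ :=
  ∑ a ∈ S, (V i (π a) a - V i (!π a) a)

lemma swapAlloc_not {α : Type*} (i j : Bool) (h : i ≠ j) (π : α → Bool) :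
    swapAlloc i j π = fun a => !π a := by
  funext a
  unfold swapAlloc
  cases i <;> cases j <;> cases π a <;> simp_all

lemma alval_sub_swap {α : Type*} [DecidableEq α] (V : Bool → Bool → α → ℝ) (i j : Bool)
    (h : i ≠ j) (π : α → Bool) (S : Finset α) :
    alval V i π S - alval V i (swapAlloc i j π) S = adv V i π S := by
  rw [swapAlloc_not i j h]
  simp [alval, adv, Finset.sum_sub_distrib]

lemma adv_not {α : Type*} (V : Bool → Bool → α → ℝ) (i : Bool) (π : α → Bool) (S : Finset α) :
    adv V i (fun a => !π a) S = -adv V i π S := by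
  simp [adv]

lemma adv_erase {α : Type*} [Fintype α] [DecidableEq α] (V : Bool → Bool → α → ℝ) (i : Bool)
    (π : α → Bool) (a : α) :
    adv V i π (univ.erase a) = adv V i π univ - (V i (π a) a - V i (!π a) a) := by
  unfold adv
  rw [← Finset.add_sum_erase univ _ (mem_univ a)]
  ring

/-- Moving item `a` to the other bundle changes the advantage by twice the contribution of `a`. -/
lemma adv_update {α : Type*} [Fintype α] [DecidableEq α] (V : Bool → Bool → α → ℝ) (i : Bool)
    (π : α → Bool) (a : α) :
    adv V i (Function.update π a (!π a)) univ =
      adv V i π univ - 2 * (V i (π a) a - V i (!π a) a) := by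
  have h1 := adv_erase V i π a
  have h2 := adv_erase V i (Function.update π a (!π a)) a
  have h3 : adv V i (Function.update π a (!π a)) (univ.erase a) = adv V i π (univ.erase a) := by
    refine Finset.sum_congr rfl fun b hb => ?_
    rw [Function.update_of_ne (Finset.ne_of_mem_erase hb)]
  simp only [Function.update_self, Bool.not_not] at h2
  linarith

/-- A most balanced partition, from the viewpoint of agent `i`, satisfies the requirement that
`EFX` imposes on `i`. -/
lemma efx_cutter {α : Type*} [Fintype α] [DecidableEq α] (V : Bool → Bool → α → ℝ) (i : Bool)
    (π : α → Bool) (hmin : ∀ σ, |adv V i π univ| ≤ |adv V i σ univ|)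
    (a : α) (hneg : adv V i π univ < 0)
    (ha : adv V i π univ < adv V i π (univ.erase a)) : 0 ≤ adv V i π (univ.erase a) := by
  have h := hmin (Function.update π a (!π a))
  rw [adv_update] at h
  rw [adv_erase] at ha ⊢
  by_contra! hc
  refine absurd h (not_le.2 ?_)
  rw [abs_of_neg hneg, abs_lt]
  constructor <;> linarith

/-- If `π` is most balanced for agent `true` and agent `false` has no envy, then `π` is EFX. -/
lemma efx_of_balanced {α : Type*} [Fintype α] [DecidableEq α] (V : Bool → Bool → α → ℝ)
    (π : α → Bool) (hmin : ∀ σ, |adv V true π univ| ≤ |adv V true σ univ|)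
    (hpos : 0 ≤ adv V false π univ) : EFX V π := by
  intro i j henvy a ha
  unfold Envies at henvy
  have hij : i ≠ j := by
    rintro rfl
    simp [swapAlloc, alval] at henvy
  have hu := alval_sub_swap V i j hij π univ
  have he := alval_sub_swap V i j hij π (univ.erase a)
  rw [hu, he] at ha
  cases i with
  | false => linarith
  | true =>
    have := efx_cutter V true π hmin a (by linarith) ha
    linarith

/-- For any two agents with additive valuations with externalities,
there always exists an EFX allocation of the items between them. -/
theorem efx_exists_two_agents {α : Type*} [Fintype α] [DecidableEq α]
    (V : Bool → Bool → α → ℝ) :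
    ∃ π : α → Bool, EFX V π := by
  obtain ⟨π, hπ⟩ := Finite.exists_min fun σ : α → Bool => |adv V true σ univ|
  rcases le_total 0 (adv V false π univ) with h | h
  · exact ⟨π, efx_of_balanced V π hπ h⟩
  · refine ⟨fun a => !π a, efx_of_balanced V _ (fun σ => ?_) ?_⟩
    · rw [adv_not, abs_neg]
      exact hπ σ
    · rw [adv_not]
      linarith
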